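/- Let A = {0,1,2} and N = 10, and for K ≥ 0 let m(K) denote the minimum, over all subsets Y of A^{N+K} of cardinality 3^N, of the average (1/3^N) · Σ_{y ∈ Y} I(y) of empirical information content, where I(s) = −Σ_{j=1}^{L} log₂(n_{s_j}/L) for a string s of length L with symbol counts n_a. Then K = 4 is the optimal shaping order in the range considered: m(4) < m(K) for every K ∈ {0,1,2,3,5,6,7}. -/

import Mathlib

open Finset

/-- Empirical information content of a string `s` of length `L` over an alphabet `A`:
`I(s) = -∑_{j=1}^{L} log₂ (n_{s_j} / L)`, where `n_a` is the number of occurrences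
of the symbol `a` in `s`. -/
noncomputable def info {A : Type*} [DecidableEq A] {L : ℕ} (s : Fin L → A) : ℝ :=
  -∑ j : Fin L, Real.logb 2 (((univ.filter fun i => s i = s j).card : ℝ) / L)

/-- `m K` is the minimum, over all subsets `Y` of `A^{10+K}` (with `A = {0,1,2}`)
of cardinality `3^10`, of the average empirical information content
`(1/3^10) · ∑_{y ∈ Y} I(y)`. -/
noncomputable def m (K : ℕ) : ℝ :=
  ((univ : Finset (Fin (10 + K) → Fin 3)).powersetCard (3 ^ 10)).inf'
    (Finset.powersetCard_nonempty.mpr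
      (by
        simp only [Finset.card_univ, Fintype.card_fun, Fintype.card_fin]
        exact Nat.pow_le_pow_right (by norm_num) (by omega)))
    (fun Y => (∑ y ∈ Y, info y) / 3 ^ 10)

/-- Table of `⌊1000 log₂ n⌋`. -/
def lg (n : ℕ) : ℤ := ([0, 0, 1000, 1584, 2000, 2321, 2584, 2807, 3000, 3169, 3321, 3459, 3584, 3700, 3807, 3906, 4000, 4087] : List ℤ).getD n 0

lemma lg_bounds (n : ℕ) (h1 : 1 ≤ n) (h2 : n ≤ 17) :
    (lg n : ℝ) / 1000 ≤ Real.logb 2 n ∧ Real.logb 2 n ≤ ((lg n : ℝ) + 1) / 1000 := by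
  have key : ∀ n ∈ Finset.Icc 1 17, 0 ≤ lg n ∧ 2 ^ (lg n).toNat ≤ n ^ 1000 ∧
      n ^ 1000 ≤ 2 ^ ((lg n).toNat + 1) := by decide +kernel
  obtain ⟨h0, ha, hb⟩ := key n (Finset.mem_Icc.mpr ⟨h1, h2⟩)
  obtain ⟨k, hk⟩ := Int.eq_ofNat_of_zero_le h0
  rw [hk] at ha hb ⊢
  simp only [Int.toNat_natCast, Int.cast_natCast] at ha hb ⊢
  have hn : (0 : ℝ) < n := by exact_mod_cast h1
  have ha' : (2 : ℝ) ^ k ≤ (n : ℝ) ^ 1000 := by exact_mod_cast ha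
  have hb' : (n : ℝ) ^ 1000 ≤ (2 : ℝ) ^ (k + 1) := by exact_mod_cast hb
  have e : ∀ j : ℕ, Real.logb 2 ((2 : ℝ) ^ j) = j := by
    intro j
    rw [Real.logb_pow, Real.logb_self_eq_one (by norm_num), mul_one]
  have ha2 := Real.logb_le_logb_of_le (b := 2) (by norm_num) (by positivity) ha'
  have hb2 := Real.logb_le_logb_of_le (b := 2) (by norm_num) (by positivity) hb'
  rw [e, Real.logb_pow] at ha2 hb2
  push_cast at ha2 hb2
  constructor <;> linarith

/-- number of occurrences -/
def cnt {L : ℕ} (s : Fin L → Fin 3) (a : Fin 3) : ℕ := (univ.filter fun i => s i = a).card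

lemma cnt_cons {L : ℕ} (x : Fin 3) (s : Fin L → Fin 3) (a : Fin 3) :
    cnt (Fin.cons x s : Fin (L + 1) → Fin 3) a = cnt s a + if x = a then 1 else 0 := by
  unfold cnt
  simp only [Finset.card_filter, Fin.sum_univ_succ, Fin.cons_zero, Fin.cons_succ]
  ring

/-- grouped sum -/
def W (L : ℕ) (g : ℕ → ℕ → ℕ → ℤ) : ℤ :=
  ∑ p ∈ antidiagonal L, L.choose p.1 • ∑ q ∈ antidiagonal p.2, p.2.choose q.1 • g p.1 q.1 q.2

lemma W_succ (L : ℕ) (g : ℕ → ℕ → ℕ → ℤ) :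
    W (L + 1) g = W L (fun a b c => g (a + 1) b c) + W L (fun a b c => g a (b + 1) c)
      + W L (fun a b c => g a b (c + 1)) := by
  have hsym : ∀ (n : ℕ) (f : ℕ → ℕ → ℤ), ∑ p ∈ antidiagonal n, n.choose p.2 • f (p.1 + 1) p.2
      = ∑ p ∈ antidiagonal n, n.choose p.1 • f (p.1 + 1) p.2 := by
    intro n f
    refine Finset.sum_congr rfl fun p hp => ?_
    rw [Nat.choose_symm_of_eq_add (mem_antidiagonal.mp hp).symm]
  unfold W
  rw [Finset.sum_antidiagonal_choose_succ_nsmul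
    (fun a d => ∑ q ∈ antidiagonal d, d.choose q.1 • g a q.1 q.2),
    hsym L (fun a d => ∑ q ∈ antidiagonal d, d.choose q.1 • g a q.1 q.2)]
  have hin : ∀ a d : ℕ, ∑ q ∈ antidiagonal (d + 1), (d + 1).choose q.1 • g a q.1 q.2
      = ∑ q ∈ antidiagonal d, d.choose q.1 • g a q.1 (q.2 + 1)
        + ∑ q ∈ antidiagonal d, d.choose q.1 • g a (q.1 + 1) q.2 := by
    intro a d
    rw [Finset.sum_antidiagonal_choose_succ_nsmul (fun b c => g a b c),
      hsym d (fun b c => g a b c)]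
  simp only [hin, smul_add, Finset.sum_add_distrib]
  ring

lemma sum_W (L : ℕ) : ∀ g : ℕ → ℕ → ℕ → ℤ,
    ∑ s : Fin L → Fin 3, g (cnt s 0) (cnt s 1) (cnt s 2) = W L g := by
  induction L with
  | zero => intro g; simp [W, cnt]
  | succ L ih =>
    intro g
    rw [W_succ, ← ih, ← ih, ← ih,
      ← (Fin.consEquiv (fun _ : Fin (L + 1) => Fin 3)).sum_comp, Fintype.sum_prod_type,
      Fin.sum_univ_three]
    simp [Fin.consEquiv, cnt_cons]

/-- lower approximation -/
def ilo (a b c : ℕ) : ℤ :=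
  (a + b + c) * lg (a + b + c) - (a * (lg a + 1) + b * (lg b + 1) + c * (lg c + 1))

/-- upper approximation -/
def iup (a b c : ℕ) : ℤ :=
  (a + b + c) * (lg (a + b + c) + 1) - (a * lg a + b * lg b + c * lg c)

lemma cnt_sum {L : ℕ} (s : Fin L → Fin 3) : cnt s 0 + cnt s 1 + cnt s 2 = L := by
  have h := Finset.card_eq_sum_card_fiberwise (s := (univ : Finset (Fin L)))
    (t := (univ : Finset (Fin 3))) (f := s) (fun _ _ => Finset.mem_coe.mpr (mem_univ _))
  rw [Fin.sum_univ_three, Finset.card_univ, Fintype.card_fin] at h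
  exact h.symm

lemma info_eq {L : ℕ} (hL : 1 ≤ L) (s : Fin L → Fin 3) :
    info s = L * Real.logb 2 L - (cnt s 0 * Real.logb 2 (cnt s 0)
      + cnt s 1 * Real.logb 2 (cnt s 1) + cnt s 2 * Real.logb 2 (cnt s 2)) := by
  have h1 : ∀ j : Fin L, Real.logb 2 (((univ.filter fun i => s i = s j).card : ℝ) / L)
      = Real.logb 2 (cnt s (s j)) - Real.logb 2 L := by
    intro j
    have : 0 < cnt s (s j) := Finset.card_pos.mpr ⟨j, by simp⟩
    rw [← Real.logb_div (by positivity) (by positivity)]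
    rfl
  have h2 : ∑ j : Fin L, Real.logb 2 (cnt s (s j))
      = ∑ a : Fin 3, (cnt s a : ℝ) * Real.logb 2 (cnt s a) := by
    rw [← Finset.sum_fiberwise (s := univ) (g := s)]
    refine Finset.sum_congr rfl fun a _ => ?_
    rw [Finset.sum_congr rfl (g := fun _ => Real.logb 2 (cnt s a))
      (fun j hj => by rw [(Finset.mem_filter.mp hj).2]), Finset.sum_const, nsmul_eq_mul]
    rfl
  unfold info
  rw [Finset.sum_congr rfl (fun j _ => h1 j), Finset.sum_sub_distrib, h2, Fin.sum_univ_three]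
  simp

lemma mul_lg_bounds (n : ℕ) (h2 : n ≤ 17) :
    (n : ℝ) * lg n ≤ 1000 * (n * Real.logb 2 n) ∧
    1000 * (n * Real.logb 2 n) ≤ (n : ℝ) * (lg n + 1) := by
  rcases Nat.eq_zero_or_pos n with rfl | h
  · simp
  · obtain ⟨ha, hb⟩ := lg_bounds n h h2
    have hn : (0 : ℝ) ≤ n := by positivity
    constructor <;> nlinarith

lemma info_bounds {L : ℕ} (hL : 1 ≤ L) (hL' : L ≤ 17) (s : Fin L → Fin 3) :
    (ilo (cnt s 0) (cnt s 1) (cnt s 2) : ℝ) ≤ 1000 * info s ∧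
    1000 * info s ≤ (iup (cnt s 0) (cnt s 1) (cnt s 2) : ℝ) := by
  have hs := cnt_sum s
  have hc : (cnt s 0 : ℝ) + cnt s 1 + cnt s 2 = L := by exact_mod_cast hs
  rw [info_eq hL, ilo, iup, hs]
  push_cast
  rw [hc]
  have b0 := mul_lg_bounds (cnt s 0) (by omega)
  have b1 := mul_lg_bounds (cnt s 1) (by omega)
  have b2 := mul_lg_bounds (cnt s 2) (by omega)
  have b3 := mul_lg_bounds L hL'
  constructor <;> linarith [b0.1, b0.2, b1.1, b1.2, b2.1, b2.2, b3.1, b3.2]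

/-- lower bound on the total, by duality -/
def low (L : ℕ) (t : ℤ) : ℤ := 3 ^ 10 * t - W L (fun a b c => max (t - ilo a b c) 0)

lemma le_m (K : ℕ) (hK : K ≤ 7) (t : ℤ) : (low (10 + K) t : ℝ) ≤ 1000 * 3 ^ 10 * m K := by
  unfold m
  obtain ⟨Y, hY, hm⟩ := Finset.exists_mem_eq_inf' (s :=
    (univ : Finset (Fin (10 + K) → Fin 3)).powersetCard (3 ^ 10))
    (Finset.powersetCard_nonempty.mpr
      (by
        simp only [Finset.card_univ, Fintype.card_fun, Fintype.card_fin]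
        exact Nat.pow_le_pow_right (by norm_num) (by omega)))
    (fun Y => (∑ y ∈ Y, info y) / 3 ^ 10)
  rw [hm]
  have hcard := (Finset.mem_powersetCard.mp hY).2
  have h1 : low (10 + K) t ≤ ∑ y ∈ Y, ilo (cnt y 0) (cnt y 1) (cnt y 2) := by
    rw [low, ← sum_W]
    have h2 : ∑ y ∈ Y, (t - ilo (cnt y 0) (cnt y 1) (cnt y 2))
        ≤ ∑ y : Fin (10 + K) → Fin 3, max (t - ilo (cnt y 0) (cnt y 1) (cnt y 2)) 0 :=
      (Finset.sum_le_sum fun y _ => le_max_left _ _).trans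
        (Finset.sum_le_sum_of_subset_of_nonneg (Finset.subset_univ Y)
          fun y _ _ => le_max_right _ _)
    rw [Finset.sum_sub_distrib, Finset.sum_const, hcard, nsmul_eq_mul] at h2
    push_cast at h2
    linarith
  have h3 : ((∑ y ∈ Y, ilo (cnt y 0) (cnt y 1) (cnt y 2) : ℤ) : ℝ)
      ≤ ∑ y ∈ Y, 1000 * info y := by
    push_cast
    exact Finset.sum_le_sum fun y _ => (info_bounds (by omega) (by omega) y).1
  rw [← Finset.mul_sum] at h3
  have h4 : (low (10 + K) t : ℝ) ≤ ((∑ y ∈ Y, ilo (cnt y 0) (cnt y 1) (cnt y 2) : ℤ) : ℝ) := by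
    exact_mod_cast h1
  have h5 : (1000 * 3 ^ 10 * ((∑ y ∈ Y, info y) / 3 ^ 10) : ℝ) = 1000 * ∑ y ∈ Y, info y := by
    field_simp
  rw [h5]
  exact h4.trans h3

/-- upper bound on the total -/
def upp (L : ℕ) (t : ℤ) : ℤ := 3 ^ 10 * t - W L (fun a b c => max (t - iup a b c) 0)

lemma m_le (K : ℕ) (hK : K ≤ 7) (t : ℤ)
    (h1 : W (10 + K) (fun a b c => if iup a b c < t then 1 else 0) ≤ 3 ^ 10)
    (h2 : 3 ^ 10 ≤ W (10 + K) (fun a b c => if iup a b c ≤ t then 1 else 0)) :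
    1000 * 3 ^ 10 * m K ≤ (upp (10 + K) t : ℝ) := by
  rw [← sum_W] at h1 h2
  rw [Finset.sum_boole] at h1 h2
  obtain ⟨Y, hSY, hYT, hcard⟩ := Finset.exists_subsuperset_card_eq (n := 3 ^ 10)
    (s := univ.filter fun y : Fin (10 + K) → Fin 3 => iup (cnt y 0) (cnt y 1) (cnt y 2) < t)
    (t := univ.filter fun y : Fin (10 + K) → Fin 3 => iup (cnt y 0) (cnt y 1) (cnt y 2) ≤ t)
    (Finset.monotone_filter_right _ fun y _ h => le_of_lt h)
    (by exact_mod_cast h1) (by exact_mod_cast h2)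
  have hm : m K ≤ (∑ y ∈ Y, info y) / 3 ^ 10 :=
    Finset.inf'_le (fun Y => (∑ y ∈ Y, info y) / 3 ^ 10)
      (Finset.mem_powersetCard.mpr ⟨Finset.subset_univ Y, hcard⟩)
  have h3 : upp (10 + K) t = ∑ y ∈ Y, iup (cnt y 0) (cnt y 1) (cnt y 2) := by
    rw [upp, ← sum_W]
    have h4 : ∑ y : Fin (10 + K) → Fin 3, max (t - iup (cnt y 0) (cnt y 1) (cnt y 2)) 0
        = ∑ y ∈ Y, (t - iup (cnt y 0) (cnt y 1) (cnt y 2)) := by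
      rw [← Finset.sum_subset (Finset.subset_univ Y)]
      · refine Finset.sum_congr rfl fun y hy => max_eq_left ?_
        have := (Finset.mem_filter.mp (hYT hy)).2
        linarith
      · intro y _ hy
        refine max_eq_right ?_
        by_contra hcon
        exact hy (hSY (Finset.mem_filter.mpr ⟨mem_univ _, by linarith⟩))
    rw [h4, Finset.sum_sub_distrib, Finset.sum_const, hcard, nsmul_eq_mul]
    push_cast
    ring
  have h5 : ∑ y ∈ Y, 1000 * info y
      ≤ ((∑ y ∈ Y, iup (cnt y 0) (cnt y 1) (cnt y 2) : ℤ) : ℝ) := by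
    push_cast
    exact Finset.sum_le_sum fun y _ => (info_bounds (by omega) (by omega) y).2
  rw [← Finset.mul_sum, ← h3] at h5
  have h6 : (1000 * 3 ^ 10 * ((∑ y ∈ Y, info y) / 3 ^ 10) : ℝ) = 1000 * ∑ y ∈ Y, info y := by
    field_simp
  calc (1000 * 3 ^ 10 * m K : ℝ) ≤ 1000 * 3 ^ 10 * ((∑ y ∈ Y, info y) / 3 ^ 10) := by gcongr
    _ ≤ _ := by rw [h6]; exact h5

lemma m_lt (K : ℕ) (hK : K ≤ 7) (t : ℤ) (h : upp (10 + 4) 15350 < low (10 + K) t) :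
    m 4 < m K := by
  have h1 := m_le 4 (by norm_num) 15350 (by decide +kernel) (by decide +kernel)
  have h2 := le_m K hK t
  have h3 : (upp (10 + 4) 15350 : ℝ) < low (10 + K) t := by exact_mod_cast h
  have h4 := h1.trans_lt (h3.trans_le h2)
  exact lt_of_mul_lt_mul_left h4 (by positivity)

/-- With `A = {0,1,2}` and `N = 10`, `K = 4` is the optimal shaping order in the range
considered: `m 4 < m K` for every `K ∈ {0,1,2,3,5,6,7}`. -/
theorem stmt_3 : ∀ K ∈ ({0, 1, 2, 3, 5, 6, 7} : Finset ℕ), m 4 < m K := by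
  intro K hK
  simp only [Finset.mem_insert, Finset.mem_singleton] at hK
  rcases hK with rfl | rfl | rfl | rfl | rfl | rfl | rfl
  · exact m_lt 0 (by norm_num) 15710 (by decide +kernel)
  · exact m_lt 1 (by norm_num) 15789 (by decide +kernel)
  · exact m_lt 2 (by norm_num) 15368 (by decide +kernel)
  · exact m_lt 3 (by norm_num) 15576 (by decide +kernel)
  · exact m_lt 5 (by norm_num) 14564 (by decide +kernel)
  · exact m_lt 6 (by norm_num) 15271 (by decide +kernel)
  · exact m_lt 7 (by norm_num) 14858 (by decide +kernel)
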